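/- Let k be continuous on [a,b]×[a,b] and g ∈ C([a,b]). The following two statements are equivalent: (A) there exists a unique u_N^SE ∈ C([a,b]) satisfying u_N^SE = g + V_N^SE[u_N^SE]; (B) there exists a unique w ∈ C([a,b]) satisfying w = P_N^RZ(g + V_N^SE[w]). Moreover, when these hold, w = P_N^RZ u_N^SE. -/

import Mathlib

/-!
Both equations are governed by the values of the unknown at the nodes `t_j`, `|j| ≤ N`: the operators
`V_N` and `P_N` only see those values (`VNSE_congr`, `PNRZ_congr`), and `P_N` interpolates at the
nodes (`PNRZ_node`), the two outer nodes being handled by Cramer's rule with determinant `Δ_N ≠ 0`.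
Hence `V_N (P_N f) = V_N f`, and the maps `u ↦ P_N u` and `w ↦ g + V_N w` send solutions of each
equation to solutions of the other and are mutually inverse on solutions. Unique solvability is
thereby transferred in both directions, together with `w = P_N u`.

The analytic content is that `V_N f` and `P_N f` are continuous up to the endpoints of `[a,b]`.
Since `φ(t) → ∓∞` as `t` tends to `a`, `b`, this reduces to limits at infinity of the functions
composed with `φ` (`continuousOn_ext`): `sinc x → 0`, and the Dirichlet integral `Si x → π/2`. The
latter follows from Fubini applied to `sin x · exp (-x y)` on `(0,R] × (0,∞)`, which gives the
explicit bound `|Si R - π/2| ≤ 2 / R`.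
-/

namespace SincVolterra

noncomputable section

/-- The sine integral `Si(x) = ∫₀ˣ (sin τ)/τ dτ`. -/
def Si (x : ℝ) : ℝ := ∫ τ in (0:ℝ)..x, Real.sin τ / τ

/-- The Sinc function `S(j,h)(x)`. -/
def sincF (j : ℤ) (h x : ℝ) : ℝ :=
  if x = (j : ℝ) * h then 1
  else Real.sin (Real.pi * (x - (j : ℝ) * h) / h) / (Real.pi * (x - (j : ℝ) * h) / h)

/-- `J(j,h)(x) = h (1/2 + (1/π) Si(π(x - jh)/h))`. -/
def Jfun (j : ℤ) (h x : ℝ) : ℝ :=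
  h * (1/2 + (1/Real.pi) * Si (Real.pi * (x - (j : ℝ) * h) / h))

/-- The tanh (SE) transformation. -/
def psiSE (a b x : ℝ) : ℝ := (b - a)/2 * Real.tanh (x/2) + (b + a)/2

/-- The inverse of the SE transformation. -/
def phiSE (a b t : ℝ) : ℝ := Real.log ((t - a)/(b - t))

/-- The double-exponential (DE) transformation. -/
def psiDE (a b x : ℝ) : ℝ := (b - a)/2 * Real.tanh (Real.pi/2 * Real.sinh x) + (b + a)/2

/-- The inverse of the DE transformation. -/
def phiDE (a b t : ℝ) : ℝ := Real.arsinh (1/Real.pi * Real.log ((t - a)/(b - t)))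

/-- The SE transformation as a complex map. -/
def psiSEC (a b : ℝ) (z : ℂ) : ℂ :=
  (((b : ℂ) - (a : ℂ))/2) * Complex.tanh (z/2) + ((b : ℂ) + (a : ℂ))/2

/-- The DE transformation as a complex map. -/
def psiDEC (a b : ℝ) (z : ℂ) : ℂ :=
  (((b : ℂ) - (a : ℂ))/2) * Complex.tanh (((Real.pi : ℂ))/2 * Complex.sinh z) + ((b : ℂ) + (a : ℂ))/2

/-- The strip `D_d = {ζ : |Im ζ| < d}`. -/
def Dstrip (d : ℝ) : Set ℂ := {z : ℂ | |z.im| < d}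

/-- `D = ψ^SE(D_d)`. -/
def DSE (a b d : ℝ) : Set ℂ := psiSEC a b '' Dstrip d

def omA (a b t : ℝ) : ℝ := (b - t)/(b - a)

def omB (a b t : ℝ) : ℝ := (t - a)/(b - a)

/-- The SE collocation points `t_j^SE = ψ^SE(jh)`. -/
def tSE (a b h : ℝ) (j : ℤ) : ℝ := psiSE a b ((j : ℝ) * h)

/-- The DE collocation points `t_j^DE = ψ^DE(jh)`. -/
def tDE (a b h : ℝ) (j : ℤ) : ℝ := psiDE a b ((j : ℝ) * h)

/-- `δ_m^{(-1)} = 1/2 + (1/π) Si(π m)`. -/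
def deltaM (m : ℤ) : ℝ := 1/2 + (1/Real.pi) * Si (Real.pi * (m : ℝ))

/-- `J(j,h)(φ^SE(t))`, extended continuously to `t = a` (value 0) and `t = b` (value h). -/
def JSEext (a b h : ℝ) (j : ℤ) (t : ℝ) : ℝ :=
  if t ≤ a then 0 else if b ≤ t then h else Jfun j h (phiSE a b t)

/-- `J(j,h)(φ^DE(t))`, extended continuously to `t = a` (value 0) and `t = b` (value h). -/
def JDEext (a b h : ℝ) (j : ℤ) (t : ℝ) : ℝ :=
  if t ≤ a then 0 else if b ≤ t then h else Jfun j h (phiDE a b t)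

/-- The operator `V_N^SE`, with the continuous extension to `t = a, b` built in. -/
def VNSE (a b h : ℝ) (N : ℕ) (k : ℝ → ℝ → ℂ) (f : ℝ → ℂ) (t : ℝ) : ℂ :=
  ∑ j ∈ Finset.Icc (-(N:ℤ)) (N:ℤ),
    k t (tSE a b h j) * f (tSE a b h j) * ((deriv (psiSE a b) ((j : ℝ) * h) : ℝ) : ℂ)
      * ((JSEext a b h j t : ℝ) : ℂ)

/-- The operator `V_N^DE`, with the continuous extension to `t = a, b` built in. -/
def VNDE (a b h : ℝ) (N : ℕ) (k : ℝ → ℝ → ℂ) (f : ℝ → ℂ) (t : ℝ) : ℂ :=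
  ∑ j ∈ Finset.Icc (-(N:ℤ)) (N:ℤ),
    k t (tDE a b h j) * f (tDE a b h j) * ((deriv (psiDE a b) ((j : ℝ) * h) : ℝ) : ℂ)
      * ((JDEext a b h j t : ℝ) : ℂ)

/-- The generalized SE-Sinc approximation operator `P_N^SE`. -/
def PNSE (a b h : ℝ) (N : ℕ) (f : ℝ → ℂ) (t : ℝ) : ℂ :=
  if t ≤ a then f (tSE a b h (-(N:ℤ)))
  else if b ≤ t then f (tSE a b h (N:ℤ))
  else f (tSE a b h (-(N:ℤ))) * ((omA a b t : ℝ) : ℂ) + f (tSE a b h (N:ℤ)) * ((omB a b t : ℝ) : ℂ)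
    + ∑ j ∈ Finset.Icc (-(N:ℤ)) (N:ℤ),
        (f (tSE a b h j) - f (tSE a b h (-(N:ℤ))) * ((omA a b (tSE a b h j) : ℝ) : ℂ)
          - f (tSE a b h (N:ℤ)) * ((omB a b (tSE a b h j) : ℝ) : ℂ))
          * ((sincF j h (phiSE a b t) : ℝ) : ℂ)

/-- The generalized DE-Sinc approximation operator `P_N^DE`. -/
def PNDE (a b h : ℝ) (N : ℕ) (f : ℝ → ℂ) (t : ℝ) : ℂ :=
  if t ≤ a then f (tDE a b h (-(N:ℤ)))
  else if b ≤ t then f (tDE a b h (N:ℤ))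
  else f (tDE a b h (-(N:ℤ))) * ((omA a b t : ℝ) : ℂ) + f (tDE a b h (N:ℤ)) * ((omB a b t : ℝ) : ℂ)
    + ∑ j ∈ Finset.Icc (-(N:ℤ)) (N:ℤ),
        (f (tDE a b h j) - f (tDE a b h (-(N:ℤ))) * ((omA a b (tDE a b h j) : ℝ) : ℂ)
          - f (tDE a b h (N:ℤ)) * ((omB a b (tDE a b h j) : ℝ) : ℂ))
          * ((sincF j h (phiDE a b t) : ℝ) : ℂ)

/-- `Δ_N = ω_a(t_{-N})ω_b(t_N) - ω_b(t_{-N})ω_a(t_N)`. -/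
def DeltaN (a b h : ℝ) (N : ℕ) : ℝ :=
  omA a b (tSE a b h (-(N:ℤ))) * omB a b (tSE a b h (N:ℤ))
    - omB a b (tSE a b h (-(N:ℤ))) * omA a b (tSE a b h (N:ℤ))

def betaN (a b h : ℝ) (N : ℕ) (f : ℝ → ℂ) : ℂ :=
  (f (tSE a b h (-(N:ℤ))) * ((omB a b (tSE a b h (N:ℤ)) : ℝ) : ℂ)
    - f (tSE a b h (N:ℤ)) * ((omB a b (tSE a b h (-(N:ℤ))) : ℝ) : ℂ)) / ((DeltaN a b h N : ℝ) : ℂ)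

def gammaN (a b h : ℝ) (N : ℕ) (f : ℝ → ℂ) : ℂ :=
  (f (tSE a b h (N:ℤ)) * ((omA a b (tSE a b h (-(N:ℤ))) : ℝ) : ℂ)
    - f (tSE a b h (-(N:ℤ))) * ((omA a b (tSE a b h (N:ℤ)) : ℝ) : ℂ)) / ((DeltaN a b h N : ℝ) : ℂ)

/-- The Rashidinia–Zarebnia interpolation operator `P_N^RZ`. -/
def PNRZ (a b h : ℝ) (N : ℕ) (f : ℝ → ℂ) (t : ℝ) : ℂ :=
  if t ≤ a then betaN a b h N f
  else if b ≤ t then gammaN a b h N f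
  else betaN a b h N f * ((omA a b t : ℝ) : ℂ) + gammaN a b h N f * ((omB a b t : ℝ) : ℂ)
    + ∑ j ∈ Finset.Icc (-(N:ℤ)+1) ((N:ℤ)-1),
        (f (tSE a b h j) - betaN a b h N f * ((omA a b (tSE a b h j) : ℝ) : ℂ)
          - gammaN a b h N f * ((omB a b (tSE a b h j) : ℝ) : ℂ))
          * ((sincF j h (phiSE a b t) : ℝ) : ℂ)

/-- Reindexing `Fin (2N+1)` as `{-N, …, N}`. -/
def zidx (N : ℕ) (i : Fin (2*N+1)) : ℤ := ((i : ℕ) : ℤ) - (N : ℤ)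

/-- The matrix `V_n^SE`. -/
def VnSE (a b h : ℝ) (N : ℕ) (k : ℝ → ℝ → ℂ) : Matrix (Fin (2*N+1)) (Fin (2*N+1)) ℂ :=
  Matrix.of fun i j =>
    k (tSE a b h (zidx N i)) (tSE a b h (zidx N j))
      * ((deriv (psiSE a b) ((zidx N j : ℝ) * h) : ℝ) : ℂ) * ((h : ℝ) : ℂ)
      * ((deltaM (zidx N i - zidx N j) : ℝ) : ℂ)

/-- The matrix `V_n^DE`. -/
def VnDE (a b h : ℝ) (N : ℕ) (k : ℝ → ℝ → ℂ) : Matrix (Fin (2*N+1)) (Fin (2*N+1)) ℂ :=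
  Matrix.of fun i j =>
    k (tDE a b h (zidx N i)) (tDE a b h (zidx N j))
      * ((deriv (psiDE a b) ((zidx N j : ℝ) * h) : ℝ) : ℂ) * ((h : ℝ) : ℂ)
      * ((deltaM (zidx N i - zidx N j) : ℝ) : ℂ)

/-- The right-hand-side vector `g_n^SE`. -/
def gnSE (a b h : ℝ) (N : ℕ) (g : ℝ → ℂ) : Fin (2*N+1) → ℂ := fun i => g (tSE a b h (zidx N i))

/-- The right-hand-side vector `g_n^DE`. -/
def gnDE (a b h : ℝ) (N : ℕ) (g : ℝ → ℂ) : Fin (2*N+1) → ℂ := fun i => g (tDE a b h (zidx N i))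

/-- The matrix `E_n^RZ`. -/
def EnRZ (a b h : ℝ) (N : ℕ) : Matrix (Fin (2*N+1)) (Fin (2*N+1)) ℂ :=
  Matrix.of fun i j =>
    if (j : ℕ) = 0 then ((omA a b (tSE a b h (zidx N i)) : ℝ) : ℂ)
    else if (j : ℕ) = 2*N then ((omB a b (tSE a b h (zidx N i)) : ℝ) : ℂ)
    else if i = j then 1 else 0

/-- The matrix `V_n^RZ`. -/
def VnRZ (a b h : ℝ) (N : ℕ) (k : ℝ → ℝ → ℂ) : Matrix (Fin (2*N+1)) (Fin (2*N+1)) ℂ :=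
  Matrix.of fun i j =>
    if (j : ℕ) = 0 then VNSE a b h N k (fun t => ((omA a b t : ℝ) : ℂ)) (tSE a b h (zidx N i))
    else if (j : ℕ) = 2*N then VNSE a b h N k (fun t => ((omB a b t : ℝ) : ℂ)) (tSE a b h (zidx N i))
    else k (tSE a b h (zidx N i)) (tSE a b h (zidx N j))
      * ((deriv (psiSE a b) ((zidx N j : ℝ) * h) : ℝ) : ℂ) * ((h : ℝ) : ℂ)
      * ((deltaM (zidx N i - zidx N j) : ℝ) : ℂ)

/-- The SE-Sinc-Nyström solution `u_N^SE` built from a solution vector `u` of the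
linear system, with the continuous extension to the endpoints built in. -/
def uNSEf (a b h : ℝ) (N : ℕ) (k : ℝ → ℝ → ℂ) (g : ℝ → ℂ) (u : Fin (2*N+1) → ℂ) (t : ℝ) : ℂ :=
  g t + ∑ i : Fin (2*N+1),
    k t (tSE a b h (zidx N i)) * u i * ((deriv (psiSE a b) ((zidx N i : ℝ) * h) : ℝ) : ℂ)
      * ((JSEext a b h (zidx N i) t : ℝ) : ℂ)

/-- The DE-Sinc-Nyström solution `u_N^DE` built from a solution vector `u` of the
linear system, with the continuous extension to the endpoints built in. -/
def uNDEf (a b h : ℝ) (N : ℕ) (k : ℝ → ℝ → ℂ) (g : ℝ → ℂ) (u : Fin (2*N+1) → ℂ) (t : ℝ) : ℂ :=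
  g t + ∑ i : Fin (2*N+1),
    k t (tDE a b h (zidx N i)) * u i * ((deriv (psiDE a b) ((zidx N i : ℝ) * h) : ℝ) : ℂ)
      * ((JDEext a b h (zidx N i) t : ℝ) : ℂ)

/-- The Rashidinia–Zarebnia SE-Sinc-collocation solution `w_N^RZ` built from a
coefficient vector `c`, with the continuous extension to the endpoints built in. -/
def wRZf (a b h : ℝ) (N : ℕ) (c : Fin (2*N+1) → ℂ) (t : ℝ) : ℂ :=
  if t ≤ a then c ⟨0, by omega⟩
  else if b ≤ t then c ⟨2*N, by omega⟩
  else c ⟨0, by omega⟩ * ((omA a b t : ℝ) : ℂ) + c ⟨2*N, by omega⟩ * ((omB a b t : ℝ) : ℂ)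
    + ∑ j ∈ Finset.univ.filter (fun j : Fin (2*N+1) => (j : ℕ) ≠ 0 ∧ (j : ℕ) ≠ 2*N),
        c j * ((sincF (zidx N j) h (phiSE a b t) : ℝ) : ℂ)

/-- The SE mesh size `h = √(πd/(αN))`. -/
def hstepSE (α d : ℝ) (N : ℕ) : ℝ := Real.sqrt (Real.pi * d / (α * N))

/-- The DE mesh size `h = log(2dN/α)/N`. -/
def hstepDE (α d : ℝ) (N : ℕ) : ℝ := Real.log (2*d*N/α) / N

/-- The Nyström-type fixed point equation `u = g + V_N^SE u` on `[a,b]`. -/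
def ApredSE (a b h : ℝ) (N : ℕ) (k : ℝ → ℝ → ℂ) (g : ℝ → ℂ) (f : ℝ → ℂ) : Prop :=
  ContinuousOn f (Set.Icc a b) ∧ ∀ t ∈ Set.Icc a b, f t = g t + VNSE a b h N k f t

/-- The RZ-collocation fixed point equation `w = P_N^RZ (g + V_N^SE w)` on `[a,b]`. -/
def BpredRZ (a b h : ℝ) (N : ℕ) (k : ℝ → ℝ → ℂ) (g : ℝ → ℂ) (w : ℝ → ℂ) : Prop :=
  ContinuousOn w (Set.Icc a b) ∧
    ∀ t ∈ Set.Icc a b, w t = PNRZ a b h N (fun s => g s + VNSE a b h N k w s) t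

/-! ### The sine integral and its limits -/

lemma Si_eq_sinc (x : ℝ) : Si x = ∫ τ in (0:ℝ)..x, Real.sinc τ := by
  unfold Si
  apply intervalIntegral.integral_congr_ae
  have h0 : ∀ᵐ τ : ℝ, τ ≠ 0 := by
    simp [MeasureTheory.ae_iff]
  filter_upwards [h0] with τ hτ _
  rw [Real.sinc_of_ne_zero hτ]

lemma continuous_Si : Continuous Si := by
  have : Si = fun x => ∫ τ in (0:ℝ)..x, Real.sinc τ := funext Si_eq_sinc
  rw [this]
  exact intervalIntegral.continuous_primitive
    (fun p q => Real.continuous_sinc.intervalIntegrable p q) 0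

lemma Si_neg (x : ℝ) : Si (-x) = -Si x := by
  rw [Si_eq_sinc, Si_eq_sinc]
  have h1 := intervalIntegral.integral_comp_neg (a := 0) (b := x) Real.sinc
  simp only [Real.sinc_neg, neg_zero] at h1
  rw [h1, intervalIntegral.integral_symm]

lemma integral_exp_neg_mul_Ioi {x : ℝ} (hx : 0 < x) :
    ∫ y in Set.Ioi (0:ℝ), Real.exp (-x * y) = 1 / x := by
  rw [integral_exp_mul_Ioi (by linarith) 0]
  simp

lemma integrableOn_exp_neg_mul {x : ℝ} (hx : 0 < x) :
    MeasureTheory.IntegrableOn (fun y => Real.exp (-x * y)) (Set.Ioi (0:ℝ)) :=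
  integrableOn_exp_mul_Ioi (by linarith) 0

/-- The inner integral of the Fubini computation, from the explicit primitive
`-exp (-x y) (cos x + y sin x) / (1 + y²)`. -/
lemma integral_sin_mul_exp (R y : ℝ) :
    ∫ x in (0:ℝ)..R, Real.sin x * Real.exp (-x * y) =
      (1 + y ^ 2)⁻¹ - Real.exp (-R * y) * (Real.cos R + y * Real.sin R) / (1 + y ^ 2) := by
  have hy : (1 + y ^ 2) ≠ 0 := by positivity
  have hd : ∀ x ∈ Set.uIcc 0 R, HasDerivAt
      (fun x => -(Real.exp (-x * y) * (Real.cos x + y * Real.sin x) / (1 + y ^ 2)))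
      (Real.sin x * Real.exp (-x * y)) x := by
    intro x _
    have h1 : HasDerivAt (fun x : ℝ => Real.exp (-x * y)) (Real.exp (-x * y) * (-1 * y)) x :=
      (((hasDerivAt_id x).neg).mul_const y).exp
    have h2 : HasDerivAt (fun x : ℝ => Real.cos x + y * Real.sin x)
        (-Real.sin x + y * Real.cos x) x :=
      (Real.hasDerivAt_cos x).add ((Real.hasDerivAt_sin x).const_mul y)
    refine (((h1.mul h2).div_const (1 + y ^ 2)).neg).congr_deriv ?_
    field_simp
    ring
  rw [intervalIntegral.integral_eq_sub_of_hasDerivAt hd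
    (by apply Continuous.intervalIntegrable; fun_prop)]
  simp
  ring

/-- Absolute integrability needed for Fubini: the inner integral of the absolute value is
`|sin x| / x = |sinc x|`, which is bounded. -/
lemma integrable_sin_mul_exp (R : ℝ) :
    MeasureTheory.Integrable (Function.uncurry fun x y : ℝ => Real.sin x * Real.exp (-x * y))
      ((MeasureTheory.volume.restrict (Set.Ioc 0 R)).prod
        (MeasureTheory.volume.restrict (Set.Ioi 0))) := by
  have hm : MeasureTheory.AEStronglyMeasurable
      (Function.uncurry fun x y : ℝ => Real.sin x * Real.exp (-x * y))
      ((MeasureTheory.volume.restrict (Set.Ioc 0 R)).prod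
        (MeasureTheory.volume.restrict (Set.Ioi 0))) := by
    apply Continuous.aestronglyMeasurable
    simp only [Function.uncurry_def]
    fun_prop
  rw [MeasureTheory.integrable_prod_iff hm]
  constructor
  · filter_upwards [MeasureTheory.ae_restrict_mem measurableSet_Ioc] with x hx
    exact (integrableOn_exp_neg_mul hx.1).const_mul (Real.sin x)
  · have hc : MeasureTheory.Integrable (fun x => |Real.sinc x|)
        (MeasureTheory.volume.restrict (Set.Ioc 0 R)) :=
      (Real.continuous_sinc.abs.integrableOn_Ioc)
    refine hc.congr ?_
    filter_upwards [MeasureTheory.ae_restrict_mem measurableSet_Ioc] with x hx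
    have hx0 : 0 < x := hx.1
    simp only [Function.uncurry_apply_pair, norm_mul, Real.norm_eq_abs, Real.abs_exp]
    rw [MeasureTheory.integral_const_mul, integral_exp_neg_mul_Ioi hx0,
      Real.sinc_of_ne_zero hx0.ne', abs_div, abs_of_pos hx0]
    ring

lemma abs_Si_sub_le {R : ℝ} (hR : 0 < R) : |Si R - Real.pi / 2| ≤ 2 / R := by
  set F : ℝ → ℝ := fun y =>
    Real.exp (-R * y) * (Real.cos R + y * Real.sin R) / (1 + y ^ 2) with hF
  have hbound : ∀ y : ℝ, ‖F y‖ ≤ 2 * Real.exp (-R * y) := by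
    intro y
    have hy : 0 < 1 + y ^ 2 := by positivity
    have h1 : |Real.cos R + y * Real.sin R| ≤ 2 * (1 + y ^ 2) := by
      have hs := abs_le.1 (Real.abs_sin_le_one R)
      have hc := abs_le.1 (Real.abs_cos_le_one R)
      have := Real.sin_sq_add_cos_sq R
      rw [abs_le]
      constructor <;>
        nlinarith [sq_nonneg (y - Real.sin R), sq_nonneg (y + Real.sin R),
          sq_nonneg (Real.cos R)]
    rw [hF]
    simp only [Real.norm_eq_abs, abs_div, abs_mul, Real.abs_exp, abs_of_pos hy]
    rw [div_le_iff₀ hy]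
    nlinarith [Real.exp_pos (-R * y)]
  have hI2 : MeasureTheory.IntegrableOn (fun y => 2 * Real.exp (-R * y)) (Set.Ioi (0:ℝ)) :=
    (integrableOn_exp_neg_mul hR).const_mul 2
  have hFm : Continuous F := by
    rw [hF]
    have : ∀ y : ℝ, 1 + y ^ 2 ≠ 0 := fun y => by positivity
    fun_prop (disch := exact this _)
  have hFI : MeasureTheory.IntegrableOn F (Set.Ioi (0:ℝ)) :=
    hI2.mono' hFm.aestronglyMeasurable (Filter.Eventually.of_forall hbound)
  have hSi : Si R = Real.pi / 2 - ∫ y in Set.Ioi (0:ℝ), F y := by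
    have h1 : Si R = ∫ x in Set.Ioc 0 R, ∫ y in Set.Ioi (0:ℝ),
        Real.sin x * Real.exp (-x * y) := by
      unfold Si
      rw [intervalIntegral.integral_of_le hR.le]
      refine MeasureTheory.setIntegral_congr_fun measurableSet_Ioc fun x hx => ?_
      rw [MeasureTheory.integral_const_mul, integral_exp_neg_mul_Ioi hx.1]
      ring
    rw [h1, MeasureTheory.integral_integral_swap (integrable_sin_mul_exp R)]
    have h2 : ∀ y : ℝ, ∫ x in Set.Ioc 0 R, Real.sin x * Real.exp (-x * y) =
        (1 + y ^ 2)⁻¹ - F y := by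
      intro y
      rw [← intervalIntegral.integral_of_le hR.le, integral_sin_mul_exp]
    simp only [h2]
    rw [MeasureTheory.integral_sub integrable_inv_one_add_sq.integrableOn hFI,
      integral_Ioi_inv_one_add_sq]
    simp
  have h3 : ‖∫ y in Set.Ioi (0:ℝ), F y‖ ≤ ∫ y in Set.Ioi (0:ℝ), 2 * Real.exp (-R * y) :=
    MeasureTheory.norm_integral_le_of_norm_le hI2 (Filter.Eventually.of_forall hbound)
  rw [MeasureTheory.integral_const_mul, integral_exp_neg_mul_Ioi hR, Real.norm_eq_abs] at h3
  rw [hSi, sub_sub_cancel_left, abs_neg]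
  calc _ ≤ _ := h3
    _ = 2 / R := by ring

/-- The Dirichlet integral. -/
lemma tendsto_Si_atTop : Filter.Tendsto Si Filter.atTop (nhds (Real.pi / 2)) := by
  rw [tendsto_iff_norm_sub_tendsto_zero]
  refine squeeze_zero' (Filter.Eventually.of_forall fun _ => norm_nonneg _) ?_
    (Filter.Tendsto.div_atTop (tendsto_const_nhds (x := (2:ℝ))) Filter.tendsto_id)
  filter_upwards [Filter.eventually_gt_atTop 0] with R hR
  exact abs_Si_sub_le hR

lemma tendsto_Si_atBot : Filter.Tendsto Si Filter.atBot (nhds (-(Real.pi / 2))) := by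
  have h := (tendsto_Si_atTop.comp Filter.tendsto_neg_atBot_atTop).neg
  refine h.congr fun x => ?_
  simp [Si_neg]

/-! ### Limits of the basis functions in the variable `x = φ(t)` -/

lemma tendsto_arg_atTop {h : ℝ} (hh : 0 < h) (j : ℤ) :
    Filter.Tendsto (fun x : ℝ => Real.pi * (x - (j:ℝ) * h) / h) Filter.atTop Filter.atTop := by
  have h1 : Filter.Tendsto (fun x : ℝ => x - (j:ℝ) * h) Filter.atTop Filter.atTop :=
    Filter.tendsto_atTop_add_const_right _ _ Filter.tendsto_id
  exact (h1.const_mul_atTop Real.pi_pos).atTop_div_const hh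

lemma tendsto_arg_atBot {h : ℝ} (hh : 0 < h) (j : ℤ) :
    Filter.Tendsto (fun x : ℝ => Real.pi * (x - (j:ℝ) * h) / h) Filter.atBot Filter.atBot := by
  have h1 : Filter.Tendsto (fun x : ℝ => x - (j:ℝ) * h) Filter.atBot Filter.atBot :=
    Filter.tendsto_atBot_add_const_right _ _ Filter.tendsto_id
  exact (h1.const_mul_atBot Real.pi_pos).atBot_div_const hh

lemma continuous_Jfun (j : ℤ) (h : ℝ) : Continuous (Jfun j h) := by
  unfold Jfun
  have := continuous_Si
  fun_prop

lemma tendsto_Jfun_atTop {h : ℝ} (hh : 0 < h) (j : ℤ) :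
    Filter.Tendsto (Jfun j h) Filter.atTop (nhds h) := by
  have h1 := (((tendsto_Si_atTop.comp (tendsto_arg_atTop hh j)).const_mul
    (1 / Real.pi)).const_add (1 / 2)).const_mul h
  have e : h * (1 / 2 + 1 / Real.pi * (Real.pi / 2)) = h := by
    field_simp [Real.pi_ne_zero]
    norm_num
  rw [e] at h1
  exact h1

lemma tendsto_Jfun_atBot {h : ℝ} (hh : 0 < h) (j : ℤ) :
    Filter.Tendsto (Jfun j h) Filter.atBot (nhds 0) := by
  have h1 := (((tendsto_Si_atBot.comp (tendsto_arg_atBot hh j)).const_mul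
    (1 / Real.pi)).const_add (1 / 2)).const_mul h
  have e : h * (1 / 2 + 1 / Real.pi * (-(Real.pi / 2))) = 0 := by
    field_simp [Real.pi_ne_zero]
    norm_num
  rw [e] at h1
  exact h1

lemma sincF_eq {h : ℝ} (hh : 0 < h) (j : ℤ) (x : ℝ) :
    sincF j h x = Real.sinc (Real.pi * (x - (j:ℝ) * h) / h) := by
  unfold sincF
  split_ifs with hx
  · simp [hx]
  · rw [Real.sinc_of_ne_zero]
    exact div_ne_zero (mul_ne_zero Real.pi_ne_zero (sub_ne_zero.2 hx)) hh.ne'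

lemma continuous_sincF {h : ℝ} (hh : 0 < h) (j : ℤ) : Continuous (sincF j h) := by
  rw [funext (sincF_eq hh j)]
  have := Real.continuous_sinc
  fun_prop

lemma tendsto_sinc_atTop : Filter.Tendsto Real.sinc Filter.atTop (nhds 0) := by
  refine squeeze_zero_norm' ?_ tendsto_inv_atTop_zero
  filter_upwards [Filter.eventually_gt_atTop 0] with x hx
  rw [Real.sinc_of_ne_zero hx.ne', Real.norm_eq_abs, abs_div, abs_of_pos hx, div_eq_mul_inv]
  exact mul_le_of_le_one_left (inv_nonneg.2 hx.le) (Real.abs_sin_le_one x)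

lemma tendsto_sinc_atBot : Filter.Tendsto Real.sinc Filter.atBot (nhds 0) :=
  (tendsto_sinc_atTop.comp Filter.tendsto_neg_atBot_atTop).congr fun x => by simp

/-! ### Extension of functions of `φ(t)` to the endpoints -/

lemma phiSE_tendsto_left {a b : ℝ} (hab : a < b) :
    Filter.Tendsto (phiSE a b) (nhdsWithin a (Set.Ioi a)) Filter.atBot := by
  unfold phiSE
  have hc : ContinuousAt (fun t : ℝ => (t - a) / (b - t)) a := by
    apply ContinuousAt.div (by fun_prop) (by fun_prop)
    linarith
  refine Real.tendsto_log_nhdsGT_zero.comp (tendsto_nhdsWithin_iff.2 ⟨?_, ?_⟩)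
  · simpa [ContinuousAt] using hc.tendsto.mono_left nhdsWithin_le_nhds
  · filter_upwards [Ioo_mem_nhdsGT hab] with t ht
    exact div_pos (sub_pos.2 ht.1) (sub_pos.2 ht.2)

lemma phiSE_tendsto_right {a b : ℝ} (hab : a < b) :
    Filter.Tendsto (phiSE a b) (nhdsWithin b (Set.Iio b)) Filter.atTop := by
  unfold phiSE
  refine Real.tendsto_log_atTop.comp ?_
  have h1 : Filter.Tendsto (fun t : ℝ => b - t) (nhdsWithin b (Set.Iio b))
      (nhdsWithin 0 (Set.Ioi 0)) := by
    refine tendsto_nhdsWithin_iff.2 ⟨?_, ?_⟩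
    · have hc : ContinuousAt (fun t : ℝ => b - t) b := by fun_prop
      simpa [ContinuousAt] using hc.tendsto.mono_left nhdsWithin_le_nhds
    · filter_upwards [self_mem_nhdsWithin] with t ht
      exact sub_pos.2 (Set.mem_Iio.1 ht)
  have h2 : Filter.Tendsto (fun t : ℝ => t - a) (nhdsWithin b (Set.Iio b)) (nhds (b - a)) := by
    have hc : ContinuousAt (fun t : ℝ => t - a) b := by fun_prop
    exact hc.tendsto.mono_left nhdsWithin_le_nhds
  simpa [div_eq_mul_inv] using
    h2.pos_mul_atTop (sub_pos.2 hab) (tendsto_inv_nhdsGT_zero.comp h1)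

/-- A continuous function of `φ(t)` with limits `l`, `r` at `∓∞` extends continuously to `[a,b]`
by the values `l` at `a` and `r` at `b`. -/
lemma continuousOn_ext {a b : ℝ} (hab : a < b) {F : ℝ → ℝ} {l r : ℝ} (hF : Continuous F)
    (hl : Filter.Tendsto F Filter.atBot (nhds l)) (hr : Filter.Tendsto F Filter.atTop (nhds r)) :
    ContinuousOn (fun t => if t ≤ a then l else if b ≤ t then r else F (phiSE a b t))
      (Set.Icc a b) := by
  intro t ht
  rcases eq_or_lt_of_le ht.1 with rfl | hat
  · rw [continuousWithinAt_Icc_iff_Ici hab, ← continuousWithinAt_Ioi_iff_Ici]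
    unfold ContinuousWithinAt
    simp only [le_refl, if_true]
    refine (hl.comp (phiSE_tendsto_left hab)).congr' ?_
    filter_upwards [Ioo_mem_nhdsGT hab] with s hs
    simp [not_le.2 hs.1, not_le.2 hs.2]
  rcases eq_or_lt_of_le ht.2 with rfl | htb
  · rw [continuousWithinAt_Icc_iff_Iic hab, ← continuousWithinAt_Iio_iff_Iic]
    unfold ContinuousWithinAt
    simp only [le_refl, if_true, not_le.2 hat, if_false]
    refine (hr.comp (phiSE_tendsto_right hab)).congr' ?_
    filter_upwards [Ioo_mem_nhdsLT hab] with s hs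
    simp [not_le.2 hs.1, not_le.2 hs.2]
  · apply ContinuousAt.continuousWithinAt
    have hphi : ContinuousAt (fun t => F (phiSE a b t)) t := by
      refine hF.continuousAt.comp ?_
      unfold phiSE
      have h1 : 0 < t - a := sub_pos.2 hat
      have h2 : 0 < b - t := sub_pos.2 htb
      exact (ContinuousAt.div (by fun_prop) (by fun_prop) h2.ne').log (div_pos h1 h2).ne'
    refine hphi.congr ?_
    filter_upwards [Ioo_mem_nhds hat htb] with s hs
    simp [not_le.2 hs.1, not_le.2 hs.2]

lemma continuousOn_JSEext {a b h : ℝ} (hab : a < b) (hh : 0 < h) (j : ℤ) :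
    ContinuousOn (JSEext a b h j) (Set.Icc a b) :=
  continuousOn_ext hab (continuous_Jfun j h) (tendsto_Jfun_atBot hh j) (tendsto_Jfun_atTop hh j)

lemma continuousOn_sincF_ext {a b h : ℝ} (hab : a < b) (hh : 0 < h) (j : ℤ) :
    ContinuousOn (fun t => if t ≤ a then 0 else if b ≤ t then 0 else sincF j h (phiSE a b t))
      (Set.Icc a b) := by
  refine continuousOn_ext hab (continuous_sincF hh j) ?_ ?_
  · rw [funext (sincF_eq hh j)]
    exact tendsto_sinc_atBot.comp (tendsto_arg_atBot hh j)
  · rw [funext (sincF_eq hh j)]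
    exact tendsto_sinc_atTop.comp (tendsto_arg_atTop hh j)

/-! ### The nodes -/

lemma psiSE_mem {a b : ℝ} (hab : a < b) (x : ℝ) : psiSE a b x ∈ Set.Ioo a b := by
  unfold psiSE
  have h1 := Real.tanh_lt_one (x / 2)
  have h2 := Real.neg_one_lt_tanh (x / 2)
  constructor <;> nlinarith

lemma phiSE_psiSE {a b : ℝ} (hab : a < b) (x : ℝ) : phiSE a b (psiSE a b x) = x := by
  obtain ⟨h1, h2⟩ := psiSE_mem hab x
  have h3 : b - psiSE a b x ≠ 0 := by linarith
  have key : (psiSE a b x - a) / (b - psiSE a b x) = Real.exp x := by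
    rw [div_eq_iff h3]
    unfold psiSE
    have hc := (Real.cosh_pos (x / 2)).ne'
    have e : Real.exp x = Real.exp (x / 2) * Real.exp (x / 2) := by
      rw [← Real.exp_add]; ring_nf
    have e2 : Real.exp (x / 2) * Real.exp (-(x / 2)) = 1 := by
      rw [← Real.exp_add]; simp
    have e1 : Real.cosh (x / 2) + Real.sinh (x / 2)
        = Real.exp x * (Real.cosh (x / 2) - Real.sinh (x / 2)) := by
      rw [Real.cosh_add_sinh, Real.cosh_sub_sinh, e, mul_assoc, e2, mul_one]
    rw [Real.tanh_eq_sinh_div_cosh]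
    field_simp
    linear_combination (b - a) * e1
  unfold phiSE
  rw [key, Real.log_exp]

lemma tSE_mem {a b : ℝ} (hab : a < b) (h : ℝ) (j : ℤ) : tSE a b h j ∈ Set.Ioo a b :=
  psiSE_mem hab _

lemma tSE_mem_Icc {a b : ℝ} (hab : a < b) (h : ℝ) (j : ℤ) : tSE a b h j ∈ Set.Icc a b :=
  Set.Ioo_subset_Icc_self (tSE_mem hab h j)

lemma sincF_node {a b h : ℝ} (hab : a < b) (hh : 0 < h) (i j : ℤ) :
    sincF j h (phiSE a b (tSE a b h i)) = if i = j then 1 else 0 := by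
  rw [sincF_eq hh, tSE, phiSE_psiSE hab]
  have e : Real.pi * ((i:ℝ) * h - (j:ℝ) * h) / h = ((i - j : ℤ) : ℝ) * Real.pi := by
    push_cast
    field_simp
  rw [e]
  split_ifs with hij
  · simp [hij]
  · have h0 : ((i - j : ℤ) : ℝ) * Real.pi ≠ 0 :=
      mul_ne_zero (Int.cast_ne_zero.2 (sub_ne_zero.2 hij)) Real.pi_ne_zero
    rw [Real.sinc_of_ne_zero h0, Real.sin_int_mul_pi, zero_div]

lemma DeltaN_ne_zero {a b h : ℝ} {N : ℕ} (hab : a < b) (hN : 0 < N) (hh : 0 < h) :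
    DeltaN a b h N ≠ 0 := by
  have hba : b - a ≠ 0 := by linarith
  have hne : tSE a b h N - tSE a b h (-N) ≠ 0 := by
    intro h0
    have h1 := congrArg (phiSE a b) (sub_eq_zero.1 h0)
    unfold tSE at h1
    rw [phiSE_psiSE hab, phiSE_psiSE hab] at h1
    have hN' : (0:ℝ) < N := by exact_mod_cast hN
    push_cast at h1
    nlinarith [mul_pos hN' hh]
  have e : DeltaN a b h N = (tSE a b h N - tSE a b h (-N)) / (b - a) := by
    unfold DeltaN omA omB
    field_simp
    ring
  rw [e]
  exact div_ne_zero hne hba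

/-! ### Properties of the two operators -/

lemma VNSE_congr {a b h : ℝ} {N : ℕ} (k : ℝ → ℝ → ℂ) {f f' : ℝ → ℂ}
    (hf : ∀ j ∈ Finset.Icc (-(N:ℤ)) N, f (tSE a b h j) = f' (tSE a b h j)) :
    VNSE a b h N k f = VNSE a b h N k f' := by
  funext t
  unfold VNSE
  exact Finset.sum_congr rfl fun j hj => by rw [hf j hj]

lemma PNRZ_congr {a b h : ℝ} {N : ℕ} {f f' : ℝ → ℂ}
    (hf : ∀ j ∈ Finset.Icc (-(N:ℤ)) N, f (tSE a b h j) = f' (tSE a b h j)) :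
    PNRZ a b h N f = PNRZ a b h N f' := by
  have h1 := hf (-N) (Finset.mem_Icc.2 ⟨le_rfl, by omega⟩)
  have h2 := hf N (Finset.mem_Icc.2 ⟨by omega, le_rfl⟩)
  have hb : betaN a b h N f = betaN a b h N f' := by unfold betaN; rw [h1, h2]
  have hc : gammaN a b h N f = gammaN a b h N f' := by unfold gammaN; rw [h1, h2]
  funext t
  unfold PNRZ
  rw [hb, hc]
  congr 2
  congr 1
  refine Finset.sum_congr rfl fun j hj => ?_
  rw [Finset.mem_Icc] at hj
  rw [hf j (Finset.mem_Icc.2 ⟨by omega, by omega⟩)]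

lemma continuousOn_VNSE {a b h : ℝ} {N : ℕ} (hab : a < b) (hh : 0 < h) {k : ℝ → ℝ → ℂ}
    (hk : ContinuousOn (Function.uncurry k) (Set.Icc a b ×ˢ Set.Icc a b)) (f : ℝ → ℂ) :
    ContinuousOn (VNSE a b h N k f) (Set.Icc a b) := by
  unfold VNSE
  refine continuousOn_finsetSum _ fun j _ => ?_
  have h1 : ContinuousOn (fun t => k t (tSE a b h j)) (Set.Icc a b) :=
    hk.comp (f := fun t => (t, tSE a b h j)) (by fun_prop)
      fun t ht => ⟨ht, tSE_mem_Icc hab h j⟩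
  have h2 : ContinuousOn (fun t => ((JSEext a b h j t : ℝ) : ℂ)) (Set.Icc a b) :=
    Complex.continuous_ofReal.comp_continuousOn (continuousOn_JSEext hab hh j)
  exact ((h1.mul continuousOn_const).mul continuousOn_const).mul h2

lemma continuousOn_PNRZ {a b h : ℝ} {N : ℕ} (hab : a < b) (hh : 0 < h) (f : ℝ → ℂ) :
    ContinuousOn (PNRZ a b h N f) (Set.Icc a b) := by
  have hba : b - a ≠ 0 := by linarith
  have hs : ∀ j : ℤ, ContinuousOn (fun t => (((if t ≤ a then 0 else if b ≤ t then 0 else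
      sincF j h (phiSE a b t) : ℝ)) : ℂ)) (Set.Icc a b) := fun j =>
    Complex.continuous_ofReal.comp_continuousOn (continuousOn_sincF_ext hab hh j)
  have hA : Continuous fun t => ((omA a b t : ℝ) : ℂ) := by unfold omA; fun_prop
  have hB : Continuous fun t => ((omB a b t : ℝ) : ℂ) := by unfold omB; fun_prop
  have key : ContinuousOn (fun t => betaN a b h N f * ((omA a b t : ℝ) : ℂ)
      + gammaN a b h N f * ((omB a b t : ℝ) : ℂ)
      + ∑ j ∈ Finset.Icc (-(N:ℤ)+1) ((N:ℤ)-1),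
        (f (tSE a b h j) - betaN a b h N f * ((omA a b (tSE a b h j) : ℝ) : ℂ)
          - gammaN a b h N f * ((omB a b (tSE a b h j) : ℝ) : ℂ))
          * (((if t ≤ a then 0 else if b ≤ t then 0 else
      sincF j h (phiSE a b t) : ℝ)) : ℂ)) (Set.Icc a b) := by
    refine ContinuousOn.add (by fun_prop) ?_
    exact continuousOn_finsetSum _ fun j _ => continuousOn_const.mul (hs j)
  refine key.congr fun t ht => ?_
  unfold PNRZ
  rcases eq_or_lt_of_le ht.1 with rfl | hat
  · simp [omA, omB, hba]
  rcases eq_or_lt_of_le ht.2 with rfl | htb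
  · simp [omA, omB, hba, not_le.2 hat]
  · simp [not_le.2 hat, not_le.2 htb]

/-- `P_N^RZ` interpolates at all nodes, including the two outer ones. -/
lemma PNRZ_node {a b h : ℝ} {N : ℕ} (hab : a < b) (hN : 0 < N) (hh : 0 < h) (f : ℝ → ℂ) :
    ∀ i ∈ Finset.Icc (-(N:ℤ)) N, PNRZ a b h N f (tSE a b h i) = f (tSE a b h i) := by
  intro i hi
  rw [Finset.mem_Icc] at hi
  obtain ⟨h1, h2⟩ := tSE_mem hab h i
  have hD : ((DeltaN a b h N : ℝ) : ℂ) ≠ 0 := Complex.ofReal_ne_zero.2 (DeltaN_ne_zero hab hN hh)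
  have hD' : ((DeltaN a b h N : ℝ) : ℂ) =
      ((omA a b (tSE a b h (-(N:ℤ))) : ℝ) : ℂ) * ((omB a b (tSE a b h (N:ℤ)) : ℝ) : ℂ)
    - ((omB a b (tSE a b h (-(N:ℤ))) : ℝ) : ℂ) * ((omA a b (tSE a b h (N:ℤ)) : ℝ) : ℂ) := by
    unfold DeltaN; push_cast; ring
  unfold PNRZ
  rw [if_neg (not_le.2 h1), if_neg (not_le.2 h2)]
  simp only [sincF_node hab hh]
  by_cases hin : i ∈ Finset.Icc (-(N:ℤ)+1) ((N:ℤ)-1)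
  · rw [Finset.sum_eq_single i]
    · simp
    · intro j _ hji
      simp [Ne.symm hji]
    · intro hc
      exact absurd hin hc
  · rw [Finset.sum_eq_zero]
    · rw [Finset.mem_Icc] at hin
      have hor : i = -N ∨ i = N := by omega
      unfold betaN gammaN
      rcases hor with rfl | rfl
      · field_simp
        rw [hD']
        ring
      · field_simp
        rw [hD']
        ring
    · intro j hj
      have : i ≠ j := fun hc => hin (hc ▸ hj)
      simp [this]

/-! ### Correspondence of solutions -/

lemma BpredRZ_of_ApredSE {a b h : ℝ} {N : ℕ} (hab : a < b) (hN : 0 < N) (hh : 0 < h)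
    {k : ℝ → ℝ → ℂ} {g u : ℝ → ℂ} (hu : ApredSE a b h N k g u) :
    BpredRZ a b h N k g (PNRZ a b h N u) := by
  refine ⟨continuousOn_PNRZ hab hh u, fun t _ => ?_⟩
  rw [VNSE_congr k (PNRZ_node hab hN hh u)]
  exact congrFun (PNRZ_congr fun j _ => hu.2 _ (tSE_mem_Icc hab h j)) t

lemma ApredSE_of_BpredRZ {a b h : ℝ} {N : ℕ} (hab : a < b) (hN : 0 < N) (hh : 0 < h)
    {k : ℝ → ℝ → ℂ} {g w : ℝ → ℂ}
    (hk : ContinuousOn (Function.uncurry k) (Set.Icc a b ×ˢ Set.Icc a b))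
    (hg : ContinuousOn g (Set.Icc a b)) (hw : BpredRZ a b h N k g w) :
    ApredSE a b h N k g (fun t => g t + VNSE a b h N k w t) := by
  refine ⟨hg.add (continuousOn_VNSE hab hh hk w), fun t _ => ?_⟩
  have e : VNSE a b h N k w = VNSE a b h N k (fun t => g t + VNSE a b h N k w t) :=
    VNSE_congr k fun j hj => by
      rw [hw.2 _ (tSE_mem_Icc hab h j), PNRZ_node hab hN hh _ j hj]
  simp only [← e]

/-- equivalence of unique solvability of the SE-Sinc-Nyström and
Rashidinia–Zarebnia collocation equations, and `w = P_N^RZ u_N^SE`. -/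
theorem SE_Nystrom_RZ_collocation_equiv
    (a b h : ℝ) (N : ℕ) (hab : a < b) (hN : 0 < N) (hh : 0 < h)
    (k : ℝ → ℝ → ℂ) (g : ℝ → ℂ)
    (hk : ContinuousOn (Function.uncurry k) (Set.Icc a b ×ˢ Set.Icc a b))
    (hg : ContinuousOn g (Set.Icc a b)) :
    ((∃ uN, ApredSE a b h N k g uN ∧
        ∀ u', ApredSE a b h N k g u' → Set.EqOn u' uN (Set.Icc a b)) ↔
      (∃ w, BpredRZ a b h N k g w ∧
        ∀ w', BpredRZ a b h N k g w' → Set.EqOn w' w (Set.Icc a b))) ∧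
    (∀ uN w, ApredSE a b h N k g uN →
      (∀ u', ApredSE a b h N k g u' → Set.EqOn u' uN (Set.Icc a b)) →
      BpredRZ a b h N k g w →
      Set.EqOn w (PNRZ a b h N uN) (Set.Icc a b)) := by
  have hthird : ∀ uN w, ApredSE a b h N k g uN →
      (∀ u', ApredSE a b h N k g u' → Set.EqOn u' uN (Set.Icc a b)) →
      BpredRZ a b h N k g w →
      Set.EqOn w (PNRZ a b h N uN) (Set.Icc a b) := by
    intro uN w _ hun hw t ht
    have h1 := hun _ (ApredSE_of_BpredRZ hab hN hh hk hg hw)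
    rw [hw.2 t ht]
    exact congrFun (PNRZ_congr fun j _ => h1 (tSE_mem_Icc hab h j)) t
  refine ⟨⟨?_, ?_⟩, hthird⟩
  · rintro ⟨u, hu, hun⟩
    exact ⟨_, BpredRZ_of_ApredSE hab hN hh hu, fun w' hw' => hthird u w' hu hun hw'⟩
  · rintro ⟨w, hw, hwn⟩
    refine ⟨_, ApredSE_of_BpredRZ hab hN hh hk hg hw, fun u' hu' t ht => ?_⟩
    have h1 := hwn _ (BpredRZ_of_ApredSE hab hN hh hu')
    have e : VNSE a b h N k u' = VNSE a b h N k w := VNSE_congr k fun j hj => by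
      rw [← h1 (tSE_mem_Icc hab h j), PNRZ_node hab hN hh u' j hj]
    rw [hu'.2 t ht, e]

end

end SincVolterra
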